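/- For every odd integer k ≥ 3 there exists a sequence (f_v)_{v ∈ ℕ}, where f_v is a k-uniform hypergraph property on v vertices, together with constants c, C > 0 and v₀ ∈ ℕ, such that for all v ≥ v₀: c·v^{k/2} ≤ s(f_v) ≤ C·v^{k/2} and bs(f_v) ≥ c·v^{k²/(k+1)}; consequently bs(f_v) ≥ c'·s(f_v)^{2k/(k+1)} for some constant c' > 0 and all v ≥ v₀. -/

import Mathlib

open Finset

/-- The coordinate set: `k`-element subsets of `Fin v`. -/
abbrev KSet (v k : ℕ) : Type := {S : Finset (Fin v) // S.card = k}

/-- A `k`-uniform hypergraph on `Fin v`: a Boolean function on `k`-sets. -/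
abbrev HGraph (v k : ℕ) : Type := KSet v k → Bool

/-- Sensitivity of `f` at input `x`: the number of coordinates whose flip changes `f`. -/
def localSens {I : Type} [Fintype I] [DecidableEq I]
    (f : (I → Bool) → Bool) (x : I → Bool) : ℕ :=
  (Finset.univ.filter fun i => f (Function.update x i (!x i)) ≠ f x).card

/-- Sensitivity of `f`: maximum of `localSens f x` over all inputs `x`. -/
def sens {I : Type} [Fintype I] [DecidableEq I] (f : (I → Bool) → Bool) : ℕ :=
  Finset.univ.sup (localSens f)

/-- `sensOn b f` is `s^b(f)`: max sensitivity over inputs with `f x = b`. -/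
def sensOn {I : Type} [Fintype I] [DecidableEq I] (b : Bool) (f : (I → Bool) → Bool) : ℕ :=
  (Finset.univ.filter fun x => f x = b).sup (localSens f)

/-- Flip all the coordinates of `x` in the block `B`. -/
def flipBlock {I : Type} [DecidableEq I] (x : I → Bool) (B : Finset I) : I → Bool :=
  fun i => if i ∈ B then !x i else x i

/-- Block sensitivity of `f` at `x`: maximum number of pairwise disjoint sensitive blocks. -/
noncomputable def localBlockSens {I : Type} [Fintype I] [DecidableEq I]
    (f : (I → Bool) → Bool) (x : I → Bool) : ℕ :=
  sSup {n : ℕ | ∃ B : Fin n → Finset I,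
    (∀ j, f (flipBlock x (B j)) ≠ f x) ∧
    ∀ j j', j ≠ j' → Disjoint (B j) (B j')}

/-- Block sensitivity of `f`. -/
noncomputable def blockSens {I : Type} [Fintype I] [DecidableEq I]
    (f : (I → Bool) → Bool) : ℕ :=
  Finset.univ.sup (localBlockSens f)

/-- Image of a `k`-set under a permutation of the vertices. -/
def permKSet {v k : ℕ} (σ : Equiv.Perm (Fin v)) (S : KSet v k) : KSet v k :=
  ⟨S.1.map σ.toEmbedding, by rw [Finset.card_map]; exact S.2⟩

/-- A `k`-uniform hypergraph property: invariance under all vertex permutations,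
where `(σ • G) S = G (σ⁻¹ S)`. -/
def IsHypergraphProperty {v k : ℕ} (f : HGraph v k → Bool) : Prop :=
  ∀ (σ : Equiv.Perm (Fin v)) (G : HGraph v k),
    f (fun S => G (permKSet σ⁻¹ S)) = f G

section General

variable {I : Type} [Fintype I] [DecidableEq I]

lemma localSens_le_sens (f : (I → Bool) → Bool) (x : I → Bool) : localSens f x ≤ sens f :=
  Finset.le_sup (f := localSens f) (mem_univ x)

lemma sens_le {f : (I → Bool) → Bool} {m : ℕ} (h : ∀ x, localSens f x ≤ m) : sens f ≤ m :=
  Finset.sup_le fun x _ => h x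

/-- A family of pairwise disjoint sensitive blocks bounds the block sensitivity from below. -/
lemma card_le_blockSens {ι : Type} [Fintype ι] (f : (I → Bool) → Bool) (x : I → Bool)
    (B : ι → Finset I) (hB : ∀ j, f (flipBlock x (B j)) ≠ f x)
    (hd : ∀ j j', j ≠ j' → Disjoint (B j) (B j')) :
    Fintype.card ι ≤ blockSens f := by
  refine le_trans ?_ (Finset.le_sup (f := localBlockSens f) (mem_univ x))
  refine le_csSup ⟨Fintype.card I, ?_⟩ ?_
  · rintro n ⟨B, hB, hd⟩
    have hne : ∀ j, (B j).Nonempty := by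
      intro j
      rw [Finset.nonempty_iff_ne_empty]
      intro h
      apply hB j
      congr 1
      funext i
      simp [flipBlock, h]
    choose g hg using hne
    have hinj : Function.Injective g := by
      intro a b hab
      by_contra hne
      exact Finset.disjoint_left.1 (hd a b hne) (hg a) (hab ▸ hg b)
    simpa using Fintype.card_le_of_injective g hinj
  · let e := (Fintype.equivFin ι).symm
    exact ⟨fun j => B (e j), fun j => hB _, fun j j' h => hd _ _ (e.injective.ne h)⟩

end General

section IsolatedClique

variable {v k j t : ℕ}

/-- `T` is a `t`-vertex clique of `G`, and every edge of `G` meeting `T` in at least `j` vertices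
lies inside `T`. -/
def IsIsolatedClique (j t : ℕ) (G : HGraph v k) (T : Finset (Fin v)) : Prop :=
  T.card = t ∧ ∀ S : KSet v k, j ≤ (S.1 ∩ T).card → (G S = true ↔ S.1 ⊆ T)

open Classical in
/-- The hypergraph property of containing an isolated `t`-clique. -/
noncomputable def hasIsolatedClique (v k j t : ℕ) (G : HGraph v k) : Bool :=
  decide (∃ T, IsIsolatedClique j t G T)

lemma hasIsolatedClique_eq_true {G : HGraph v k} :
    hasIsolatedClique v k j t G = true ↔ ∃ T, IsIsolatedClique j t G T := by
  simp [hasIsolatedClique]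

lemma IsIsolatedClique.perm {G : HGraph v k} {T : Finset (Fin v)} (h : IsIsolatedClique j t G T)
    (σ : Equiv.Perm (Fin v)) :
    IsIsolatedClique j t (fun S => G (permKSet σ⁻¹ S)) (T.map σ.toEmbedding) := by
  refine ⟨by rw [card_map, h.1], fun S hS => ?_⟩
  have hST : (permKSet σ⁻¹ S).1 ∩ T = (S.1 ∩ T.map σ.toEmbedding).map (σ⁻¹).toEmbedding := by
    ext a
    simp [permKSet, Equiv.Perm.inv_def]
  rw [h.2 (permKSet σ⁻¹ S) (by rw [hST, card_map]; exact hS)]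
  constructor
  · intro hs a ha
    have := hs (show σ⁻¹ a ∈ (permKSet σ⁻¹ S).1 by
      rw [permKSet, mem_map_equiv]
      simpa [Equiv.Perm.inv_def] using ha)
    simp only [mem_map_equiv]
    exact this
  · intro hs a ha
    have ha' : σ a ∈ S.1 := by
      simpa [permKSet, Equiv.Perm.inv_def] using ha
    simpa using hs ha'

lemma isHypergraphProperty_hasIsolatedClique (v k j t : ℕ) :
    IsHypergraphProperty (hasIsolatedClique v k j t) := by
  intro σ G
  rw [Bool.eq_iff_iff, hasIsolatedClique_eq_true, hasIsolatedClique_eq_true]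
  constructor
  · rintro ⟨T, hT⟩
    have := hT.perm σ⁻¹
    have hG : (fun S => G (permKSet σ⁻¹ (permKSet σ⁻¹⁻¹ S))) = G := by
      funext S
      congr 1
      apply Subtype.ext
      ext a
      simp [permKSet, Equiv.Perm.inv_def]
    rw [hG] at this
    exact ⟨_, this⟩
  · rintro ⟨T, hT⟩
    exact ⟨_, hT.perm σ⟩

/-- The `k`-sets meeting `T` in at least `j` vertices. -/
def heavySets (k j : ℕ) (T : Finset (Fin v)) : Finset (KSet v k) :=
  univ.filter fun S => j ≤ (S.1 ∩ T).card

lemma mem_heavySets {T : Finset (Fin v)} {S : KSet v k} :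
    S ∈ heavySets k j T ↔ j ≤ (S.1 ∩ T).card := by
  simp [heavySets]

lemma card_heavySets_le (T : Finset (Fin v)) :
    (heavySets k j T).card ≤ T.card ^ j * v ^ (k - j) := by
  calc (heavySets k j T).card
      = ((heavySets k j T).image Subtype.val).card :=
        (card_image_of_injective _ Subtype.val_injective).symm
    _ ≤ ((powersetCard j T ×ˢ powersetCard (k - j) univ).image fun p => p.1 ∪ p.2).card := by
        apply card_le_card
        intro U hU
        obtain ⟨S, hS, rfl⟩ := mem_image.1 hU
        rw [mem_heavySets] at hS
        obtain ⟨A, hA, hAc⟩ := exists_subset_card_eq hS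
        refine mem_image.2 ⟨(A, S.1 \ A), ?_, ?_⟩
        · have hAS : A ⊆ S.1 := hA.trans inter_subset_left
          simp [mem_powersetCard, hA.trans inter_subset_right, hAc, card_sdiff_of_subset hAS, S.2]
        · exact union_sdiff_of_subset (hA.trans inter_subset_left)
    _ ≤ (powersetCard j T ×ˢ powersetCard (k - j) (univ : Finset (Fin v))).card := card_image_le
    _ = T.card.choose j * v.choose (k - j) := by simp [card_product]
    _ ≤ T.card ^ j * v ^ (k - j) :=
        Nat.mul_le_mul (Nat.choose_le_pow _ _) (Nat.choose_le_pow _ _)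

lemma le_card_heavySets (hjk : j ≤ k) (T : Finset (Fin v)) :
    T.card.choose j * (v - T.card).choose (k - j) ≤ (heavySets k j T).card := by
  calc T.card.choose j * (v - T.card).choose (k - j)
      = (powersetCard j T ×ˢ powersetCard (k - j) Tᶜ).card := by
        simp [card_product, card_compl]
    _ ≤ ((heavySets k j T).image Subtype.val).card := by
        refine card_le_card_of_injOn (fun p => p.1 ∪ p.2) ?_ ?_
        · rintro ⟨A, B⟩ h
          simp only [coe_product, Set.mem_prod, mem_coe, mem_powersetCard] at h
          obtain ⟨⟨hA, hAc⟩, hB, hBc⟩ := h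
          have hd : Disjoint A B :=
            disjoint_of_subset_left hA (disjoint_of_subset_right hB disjoint_compl_right)
          refine mem_image.2 ⟨⟨A ∪ B, ?_⟩, ?_, rfl⟩
          · rw [card_union_of_disjoint hd]; omega
          · exact mem_heavySets.2 (hAc.ge.trans (card_le_card (subset_inter subset_union_left hA)))
        · rintro ⟨A, B⟩ h ⟨A', B'⟩ h' heq
          simp only [coe_product, Set.mem_prod, mem_coe, mem_powersetCard] at h h'
          have key : ∀ {A B : Finset (Fin v)}, A ⊆ T → B ⊆ Tᶜ →
              (A ∪ B) ∩ T = A ∧ (A ∪ B) \ T = B := by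
            intro A B hA hB
            have hB' : ∀ a ∈ B, a ∉ T := fun a ha => mem_compl.1 (hB ha)
            constructor <;> ext a <;> have := @hA a <;> have := hB' a <;> simp <;> tauto
          have h1 := key h.1.1 h.2.1
          have h2 := key h'.1.1 h'.2.1
          simp only at heq
          rw [heq] at h1
          exact Prod.ext (h1.1.symm.trans h2.1) (h1.2.symm.trans h2.2)
    _ = (heavySets k j T).card := card_image_of_injective _ Subtype.val_injective

lemma IsIsolatedClique.update {G : HGraph v k} {T : Finset (Fin v)}
    (h : IsIsolatedClique j t G T) {e : KSet v k} (he : e ∉ heavySets k j T) (b : Bool) :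
    IsIsolatedClique j t (Function.update G e b) T := by
  refine ⟨h.1, fun S hS => ?_⟩
  have hne : S ≠ e := by
    rintro rfl
    exact he (mem_heavySets.2 hS)
  rw [Function.update_of_ne hne]
  exact h.2 S hS

/-- Sensitivity at an input with an isolated clique. -/
lemma IsIsolatedClique.localSens_le {G : HGraph v k} {T : Finset (Fin v)}
    (h : IsIsolatedClique j t G T) :
    localSens (hasIsolatedClique v k j t) G ≤ t ^ j * v ^ (k - j) := by
  refine le_trans (card_le_card ?_) (h.1 ▸ card_heavySets_le T)
  intro e he
  by_contra hn
  refine (mem_filter.1 he).2 ?_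
  rw [hasIsolatedClique_eq_true.2 ⟨T, h⟩, hasIsolatedClique_eq_true]
  exact ⟨T, h.update hn _⟩

/-- If `T` and `T'` share at least `j` vertices, every vertex of `T` lies in a `k`-set inside `T`
that meets `T'` in at least `j` vertices but is not contained in `T'`. -/
lemma exists_conflict (hj : 1 ≤ j) (hjk : j < k) {T T' : Finset (Fin v)} (hkT : k ≤ T.card)
    (hsub : ¬ T ⊆ T') (hcap : j ≤ (T ∩ T').card) {y : Fin v} (hy : y ∈ T) :
    ∃ S : KSet v k, y ∈ S.1 ∧ S.1 ⊆ T ∧ j ≤ (S.1 ∩ T').card ∧ ¬ S.1 ⊆ T' := by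
  obtain ⟨A, x, hA, hAc, hxT, hxT', hyA⟩ : ∃ (A : Finset (Fin v)) (x : Fin v),
      A ⊆ T ∩ T' ∧ A.card = j ∧ x ∈ T ∧ x ∉ T' ∧ y ∈ insert x A := by
    by_cases hyT' : y ∈ T'
    · obtain ⟨x, hxT, hxT'⟩ := not_subset.1 hsub
      obtain ⟨A, hyA, hA, hAc⟩ := exists_subsuperset_card_eq
        (singleton_subset_iff.2 (mem_inter.2 ⟨hy, hyT'⟩)) (by simpa using hj) hcap
      exact ⟨A, x, hA, hAc, hxT, hxT', mem_insert_of_mem (singleton_subset_iff.1 hyA)⟩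
    · obtain ⟨A, hA, hAc⟩ := exists_subset_card_eq hcap
      exact ⟨A, y, hA, hAc, hy, hyT', mem_insert_self _ _⟩
  have hins : insert x A ⊆ T := insert_subset hxT (hA.trans inter_subset_left)
  obtain ⟨S, hAS, hST, hSc⟩ := exists_subsuperset_card_eq hins
    ((card_insert_le x A).trans (by omega)) hkT
  refine ⟨⟨S, hSc⟩, hAS hyA, hST, ?_, fun h => hxT' (h (hAS (mem_insert_self _ _)))⟩
  rw [← hAc]
  exact card_le_card
    (subset_inter ((subset_insert x A).trans hAS) (hA.trans inter_subset_right))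

lemma card_inter_lt_of_isIsolatedClique_update (hj : 1 ≤ j) (hjk : j < k) (ht : 2 * k < t)
    {G : HGraph v k} {e e' : KSet v k} {b b' : Bool} {T T' : Finset (Fin v)}
    (hT : IsIsolatedClique j t (Function.update G e b) T)
    (hT' : IsIsolatedClique j t (Function.update G e' b') T') (hne : T ≠ T') :
    (T ∩ T').card < j := by
  by_contra! hcap
  have hsub : ¬ T ⊆ T' := fun h => hne (eq_of_subset_of_card_le h (by rw [hT.1, hT'.1]))
  have hcover : T ⊆ e.1 ∪ e'.1 := by
    intro y hy
    obtain ⟨S, hyS, hST, hST', hnot⟩ :=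
      exists_conflict hj hjk (by rw [hT.1]; omega) hsub hcap hy
    have h1 := (hT.2 S (by rw [inter_eq_left.2 hST, S.2]; exact hjk.le)).2 hST
    have h2 := mt (hT'.2 S hST').1 hnot
    by_cases hSe : S = e
    · exact mem_union_left _ (hSe ▸ hyS)
    by_cases hSe' : S = e'
    · exact mem_union_right _ (hSe' ▸ hyS)
    rw [Function.update_of_ne hSe] at h1
    rw [Function.update_of_ne hSe'] at h2
    exact absurd h1 h2
  have := (card_le_card hcover).trans (card_union_le _ _)
  rw [hT.1, e.2, e'.2] at this
  omega

/-- Sets of size `t` pairwise sharing fewer than `j` points form a partial design. -/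
lemma card_mul_choose_le {ι : Type} (s : Finset ι) (T : ι → Finset (Fin v))
    (hT : ∀ i ∈ s, (T i).card = t)
    (hd : ∀ i ∈ s, ∀ i' ∈ s, i ≠ i' → (T i ∩ T i').card < j) :
    s.card * t.choose j ≤ v.choose j := by
  calc s.card * t.choose j = ∑ i ∈ s, (powersetCard j (T i)).card := by
        rw [sum_congr rfl fun i hi => by rw [card_powersetCard, hT i hi]]
        simp
    _ = (s.biUnion fun i => powersetCard j (T i)).card := by
        refine (card_biUnion fun i hi i' hi' hne => ?_).symm
        rw [Function.onFun, disjoint_left]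
        intro A hA hA'
        rw [mem_powersetCard] at hA hA'
        have := card_le_card (subset_inter hA.1 hA'.1)
        have := hd i hi i' hi' hne
        omega
    _ ≤ (powersetCard j (univ : Finset (Fin v))).card := by
        refine card_le_card (biUnion_subset.2 fun i _ => powersetCard_mono (subset_univ _))
    _ = v.choose j := by simp

/-- Sensitivity at an input without isolated cliques. -/
lemma localSens_mul_choose_le (hj : 1 ≤ j) (hjk : j < k) (ht : 2 * k < t) {G : HGraph v k}
    (hG : hasIsolatedClique v k j t G = false) :
    localSens (hasIsolatedClique v k j t) G * t.choose j ≤ v.choose j := by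
  have hG' : ∀ T, ¬ IsIsolatedClique j t G T := by
    intro T hT
    rw [hasIsolatedClique_eq_true.2 ⟨T, hT⟩] at hG
    exact absurd hG (by simp)
  have hex : ∀ e : KSet v k, ∃ T : Finset (Fin v),
      hasIsolatedClique v k j t (Function.update G e (!G e)) ≠ hasIsolatedClique v k j t G →
      IsIsolatedClique j t (Function.update G e (!G e)) T := by
    intro e
    by_cases h : hasIsolatedClique v k j t (Function.update G e (!G e)) = true
    · obtain ⟨T, hT⟩ := hasIsolatedClique_eq_true.1 h
      exact ⟨T, fun _ => hT⟩
    · exact ⟨∅, fun h' => absurd (by simpa [hG] using h') h⟩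
  choose T hT using hex
  refine card_mul_choose_le _ T (fun e he => (hT e (mem_filter.1 he).2).1) ?_
  intro e he e' he' hne
  have h := hT e (mem_filter.1 he).2
  have h' := hT e' (mem_filter.1 he').2
  refine card_inter_lt_of_isIsolatedClique_update hj hjk ht h h' fun hTT => ?_
  have hheavy : j ≤ (e.1 ∩ T e).card := by
    by_contra hn
    have := h.update (e := e) (by rwa [mem_heavySets]) (G e)
    rw [Function.update_idem, Function.update_eq_self] at this
    exact hG' _ this
  have h1 := h.2 e hheavy
  have h2 := h'.2 e (hTT ▸ hheavy)
  rw [Function.update_of_ne hne, ← hTT, ← h1, Function.update_self] at h2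
  cases hGe : G e <;> simp [hGe] at h2

/-- The complete `k`-uniform hypergraph on the vertex set `T`. -/
def clique (k : ℕ) (T : Finset (Fin v)) : HGraph v k := fun S => decide (S.1 ⊆ T)

lemma isIsolatedClique_clique (T : Finset (Fin v)) :
    IsIsolatedClique j T.card (clique k T) T :=
  ⟨rfl, fun S _ => by simp [clique]⟩

lemma hasIsolatedClique_empty (hjk : j ≤ k) (hkt : k ≤ t) :
    hasIsolatedClique v k j t (fun _ => false) = false := by
  rw [← Bool.not_eq_true, hasIsolatedClique_eq_true]
  rintro ⟨T, hT⟩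
  obtain ⟨S, hST, hSc⟩ := exists_subset_card_eq (hkt.trans_eq hT.1.symm)
  have := (hT.2 ⟨S, hSc⟩ (by rw [inter_eq_left.2 hST, hSc]; exact hjk)).2 hST
  simp at this

/-- Every `k`-set meeting `T` in at least `j` vertices is sensitive for the clique on `T`. -/
lemma card_heavySets_le_localSens (hjk : j ≤ k) (hk : 2 ≤ k) (T : Finset (Fin v))
    (hkt : k < T.card) :
    (heavySets k j T).card ≤ localSens (hasIsolatedClique v k j T.card) (clique k T) := by
  refine card_le_card fun e he => mem_filter.2 ⟨mem_univ _, ?_⟩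
  rw [hasIsolatedClique_eq_true.2 ⟨T, isIsolatedClique_clique T⟩]
  rw [Ne, hasIsolatedClique_eq_true]
  rintro ⟨T', hT'⟩
  have hedge : ∀ S : KSet v k, S ≠ e → S.1 ⊆ T' → S.1 ⊆ T := by
    intro S hSe hST'
    have := (hT'.2 S (by rw [inter_eq_left.2 hST', S.2]; exact hjk)).2 hST'
    rw [Function.update_of_ne hSe] at this
    simpa [clique] using this
  have hsub : T' ⊆ T := by
    intro y hy
    -- a second `k`-subset of `T'` through `y` avoids some other vertex of `e`
    obtain ⟨z, hze, hzy⟩ : ∃ z ∈ e.1, z ≠ y :=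
      exists_mem_ne (by rw [e.2]; omega) y
    have hcard : k ≤ (T'.erase z).card := by
      have := pred_card_le_card_erase (s := T') (a := z)
      have := hT'.1
      omega
    obtain ⟨S, hyS, hS, hSc⟩ := exists_subsuperset_card_eq
      (singleton_subset_iff.2 (mem_erase.2 ⟨hzy.symm, hy⟩)) (by simp; omega) hcard
    refine hedge ⟨S, hSc⟩ ?_ (hS.trans (erase_subset _ _)) (singleton_subset_iff.1 hyS)
    rintro rfl
    exact (mem_erase.1 (hS hze)).1 rfl
  have hTT : T' = T := eq_of_subset_of_card_le hsub hT'.1.ge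
  subst hTT
  have := hT'.2 e (mem_heavySets.1 he)
  rw [Function.update_self] at this
  by_cases h : e.1 ⊆ T' <;> simp [clique, h] at this

/-- A packing of `t`-sets pairwise sharing fewer than `k` vertices gives disjoint sensitive blocks
of the empty hypergraph. -/
lemma card_le_blockSens_hasIsolatedClique {ι : Type} [Fintype ι] (hjk : j ≤ k) (hkt : k ≤ t)
    (T : ι → Finset (Fin v)) (hT : ∀ i, (T i).card = t)
    (hd : ∀ i i', i ≠ i' → (T i ∩ T i').card < k) :
    Fintype.card ι ≤ blockSens (hasIsolatedClique v k j t) := by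
  refine card_le_blockSens _ (fun _ => false) (fun i => univ.filter fun S => S.1 ⊆ T i) ?_ ?_
  · intro i
    have : flipBlock (fun _ => false) (univ.filter fun S : KSet v k => S.1 ⊆ T i)
        = clique k (T i) := by
      funext S
      simp [flipBlock, clique]
    rw [hasIsolatedClique_empty hjk hkt, this,
      hasIsolatedClique_eq_true.2 ⟨T i, hT i ▸ isIsolatedClique_clique (T i)⟩]
    simp
  · intro i i' hne
    rw [disjoint_left]
    intro S hS hS'
    have := card_le_card (subset_inter (mem_filter.1 hS).2 (mem_filter.1 hS').2)
    rw [S.2] at this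
    exact absurd (hd i i' hne) (by omega)

end IsolatedClique

section ReedSolomon

open Polynomial

/-- The graphs of the polynomials of degree less than `k` on `t` points of a prime field pairwise
share fewer than `k` points. -/
lemma exists_packing {v k t q : ℕ} (hq : q.Prime) (htq : t ≤ q) (hv : t * q ≤ v) :
    ∃ T : (Fin k → Fin q) → Finset (Fin v), (∀ i, (T i).card = t) ∧
      ∀ i i', i ≠ i' → (T i ∩ T i').card < k := by
  have : Fact q.Prime := ⟨hq⟩
  have hcard : Fintype.card (Fin k → Fin q) = Fintype.card (Fin k → ZMod q) := by
    simp [ZMod.card]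
  let E : (Fin k → Fin q) ≃ degreeLT (ZMod q) k :=
    (Fintype.equivOfCardEq hcard).trans (degreeLTEquiv (ZMod q) k).symm.toEquiv
  let pt : Fin t → ZMod q := fun i => ((i : ℕ) : ZMod q)
  have hpt : Function.Injective pt := by
    intro a b hab
    have := congrArg ZMod.val hab
    simp only [pt] at this
    rw [ZMod.val_natCast_of_lt (a.2.trans_le htq), ZMod.val_natCast_of_lt (b.2.trans_le htq)] at this
    exact Fin.ext this
  let code : Fin t × ZMod q → Fin v := fun p => ⟨p.2.val + q * p.1, by
    have h1 := p.2.val_lt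
    have h2 : q * (p.1 + 1) ≤ q * t := Nat.mul_le_mul_left _ p.1.2
    rw [mul_comm t q] at hv
    rw [mul_add] at h2
    omega⟩
  have hcode : Function.Injective code := by
    intro a b hab
    have h : a.2.val + q * a.1 = b.2.val + q * b.1 := congrArg Fin.val hab
    have h1 := congrArg (· % q) h
    have h2 := congrArg (· / q) h
    simp only [Nat.add_mul_mod_self_left, Nat.add_mul_div_left _ _ hq.pos,
      Nat.mod_eq_of_lt (ZMod.val_lt _), Nat.div_eq_of_lt (ZMod.val_lt _), zero_add] at h1 h2
    exact Prod.ext (Fin.ext h2) (ZMod.val_injective q h1)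
  let pts : (Fin k → Fin q) → Fin t → Fin v := fun i x => code (x, (E i).1.eval (pt x))
  have hpts : ∀ {i i' x x'}, pts i x = pts i' x' → x = x' ∧
      (E i).1.eval (pt x) = (E i').1.eval (pt x') := fun h => Prod.ext_iff.1 (hcode h)
  refine ⟨fun i => univ.image (pts i), fun i => ?_, fun i i' hne => ?_⟩
  · rw [card_image_of_injective _ fun x x' h => (hpts h).1]
    simp
  · by_contra! hle
    refine hne (E.injective (Subtype.ext ?_))
    let s : Finset (Fin t) := univ.filter fun x => (E i).1.eval (pt x) = (E i').1.eval (pt x)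
    have hs : k ≤ (s.image pt).card := by
      rw [card_image_of_injective _ hpt]
      refine hle.trans ((card_le_card ?_).trans (card_image_le (s := s) (f := pts i)))
      intro a ha
      obtain ⟨h1, h2⟩ := mem_inter.1 ha
      obtain ⟨x, -, rfl⟩ := mem_image.1 h1
      obtain ⟨x', -, h⟩ := mem_image.1 h2
      obtain ⟨rfl, h⟩ := hpts h
      exact mem_image_of_mem _ (mem_filter.2 ⟨mem_univ _, h.symm⟩)
    have hdeg : ∀ i, (E i).1.degree < ((s.image pt).card : WithBot ℕ) := fun i =>
      (mem_degreeLT.1 (E i).2).trans_le (by exact_mod_cast hs)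
    refine eq_of_degrees_lt_of_eval_finset_eq _ (hdeg i) (hdeg i') ?_
    intro y hy
    obtain ⟨x, hx, rfl⟩ := mem_image.1 hy
    exact (mem_filter.1 hx).2

end ReedSolomon

section Asymptotics

lemma pow_div_factorial_le_choose {n r : ℕ} {x : ℝ} (hx : 0 ≤ x) (h : x + r ≤ n + 1) :
    x ^ r / r.factorial ≤ n.choose r := by
  refine le_trans ?_ (Nat.pow_le_choose r n)
  have hr : r ≤ n + 1 := by
    have : (r : ℝ) ≤ ((n + 1 : ℕ) : ℝ) := by push_cast; linarith
    exact_mod_cast this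
  gcongr
  rw [Nat.cast_sub hr]
  push_cast
  linarith

variable {m v t : ℕ} {a : ℝ}

lemma le_choose_floor (ha : (8 * m + 8 : ℝ) ≤ a) (hat : a < t + 1) :
    (a / 2) ^ (m + 1) / (m + 1).factorial ≤ t.choose (m + 1) := by
  have : (0 : ℝ) ≤ m := Nat.cast_nonneg m
  apply pow_div_factorial_le_choose
  · linarith
  · push_cast
    linarith

lemma sens_hasIsolatedClique_le (hm : 1 ≤ m) (ha : (8 * m + 8 : ℝ) ≤ a)
    (hv : (v : ℝ) = a ^ (2 * (m + 1))) (hta : t ≤ a) (hat : a < t + 1) :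
    (sens (hasIsolatedClique v (2 * m + 1) (m + 1) t) : ℝ) ≤
      2 ^ (m + 1) * (m + 1).factorial * a ^ ((m + 1) * (2 * m + 1)) := by
  have hm0 : (0 : ℝ) ≤ m := Nat.cast_nonneg m
  have ha0 : 0 < a := by linarith
  have hbound : ∀ G, (localSens (hasIsolatedClique v (2 * m + 1) (m + 1) t) G : ℝ) ≤
      2 ^ (m + 1) * (m + 1).factorial * a ^ ((m + 1) * (2 * m + 1)) := by
    intro G
    by_cases hG : hasIsolatedClique v (2 * m + 1) (m + 1) t G = true
    · obtain ⟨T, hT⟩ := hasIsolatedClique_eq_true.1 hG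
      have h := hT.localSens_le
      rw [show 2 * m + 1 - (m + 1) = m by omega] at h
      calc (localSens (hasIsolatedClique v (2 * m + 1) (m + 1) t) G : ℝ)
          ≤ (t : ℝ) ^ (m + 1) * (v : ℝ) ^ m := by exact_mod_cast h
        _ ≤ a ^ (m + 1) * (a ^ (2 * (m + 1))) ^ m := by rw [hv]; gcongr
        _ = 1 * a ^ ((m + 1) * (2 * m + 1)) := by
            rw [← pow_mul, ← pow_add, one_mul]
            congr 1
            ring
        _ ≤ _ := by
            gcongr
            have h1 : (1 : ℝ) ≤ 2 ^ (m + 1) := one_le_pow₀ (by norm_num)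
            have h2 : (1 : ℝ) ≤ (m + 1).factorial := by exact_mod_cast Nat.factorial_pos (m + 1)
            nlinarith
    · have ht : 2 * (2 * m + 1) < t := by
        have : ((2 * (2 * m + 1) : ℕ) : ℝ) < t := by push_cast; linarith
        exact_mod_cast this
      have h := (localSens_mul_choose_le (by omega) (by omega) ht
        (Bool.eq_false_iff.2 hG)).trans (Nat.choose_le_pow _ _)
      have h' : (localSens (hasIsolatedClique v (2 * m + 1) (m + 1) t) G : ℝ) *
          t.choose (m + 1) ≤ (v : ℝ) ^ (m + 1) := by exact_mod_cast h
      have h2 : (localSens (hasIsolatedClique v (2 * m + 1) (m + 1) t) G : ℝ) *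
          ((a / 2) ^ (m + 1) / (m + 1).factorial) ≤ (v : ℝ) ^ (m + 1) :=
        (mul_le_mul_of_nonneg_left (le_choose_floor ha hat) (Nat.cast_nonneg _)).trans h'
      have hpos : 0 < (a / 2) ^ (m + 1) / ((m + 1).factorial : ℝ) := by positivity
      rw [← le_div_iff₀ hpos] at h2
      refine h2.trans_eq ?_
      rw [hv, div_eq_iff hpos.ne', div_pow, ← pow_mul]
      field_simp
      ring
  have hsup : sens (hasIsolatedClique v (2 * m + 1) (m + 1) t) ≤
      ⌊2 ^ (m + 1) * (m + 1).factorial * a ^ ((m + 1) * (2 * m + 1))⌋₊ :=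
    sens_le fun G => Nat.le_floor (hbound G)
  exact (Nat.cast_le.2 hsup).trans (Nat.floor_le (by positivity))

lemma four_mul_le_of_eq_pow (ha : (8 * m + 8 : ℝ) ≤ a) (hv : (v : ℝ) = a ^ (2 * (m + 1))) :
    4 * a ≤ v := by
  have hm0 : (0 : ℝ) ≤ m := Nat.cast_nonneg m
  have : a ^ 2 ≤ v := hv ▸ pow_le_pow_right₀ (by linarith) (by omega)
  nlinarith

lemma le_sens_hasIsolatedClique (hm : 1 ≤ m) (ha : (8 * m + 8 : ℝ) ≤ a)
    (hv : (v : ℝ) = a ^ (2 * (m + 1))) (hta : t ≤ a) (hat : a < t + 1) :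
    1 / (2 ^ (m + 1) * (m + 1).factorial * (2 ^ m * m.factorial)) * a ^ ((m + 1) * (2 * m + 1)) ≤
      (sens (hasIsolatedClique v (2 * m + 1) (m + 1) t) : ℝ) := by
  have hm0 : (0 : ℝ) ≤ m := Nat.cast_nonneg m
  have ha0 : 0 < a := by linarith
  have h4 := four_mul_le_of_eq_pow ha hv
  have htv : t ≤ v := by
    have : (t : ℝ) ≤ v := by linarith
    exact_mod_cast this
  have ht : 2 * m + 1 < t := by
    have : ((2 * m + 1 : ℕ) : ℝ) < t := by push_cast; linarith
    exact_mod_cast this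
  obtain ⟨T, -, hT⟩ := exists_subset_card_eq (s := (univ : Finset (Fin v))) (n := t) (by simpa)
  subst hT
  have h := (le_card_heavySets (k := 2 * m + 1) (j := m + 1) (by omega) T).trans
    ((card_heavySets_le_localSens (by omega) (by omega) T ht).trans (localSens_le_sens _ _))
  rw [show 2 * m + 1 - (m + 1) = m by omega] at h
  have h2 : ((v : ℝ) / 2) ^ m / m.factorial ≤ (v - T.card).choose m := by
    apply pow_div_factorial_le_choose (by positivity)
    rw [Nat.cast_sub htv]
    linarith
  calc _ = (a / 2) ^ (m + 1) / (m + 1).factorial * (((v : ℝ) / 2) ^ m / m.factorial) := by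
        rw [hv, div_pow, div_pow]
        field_simp
        ring
    _ ≤ (T.card.choose (m + 1) : ℝ) * (v - T.card).choose m :=
        mul_le_mul (le_choose_floor ha hat) h2 (by positivity) (by positivity)
    _ ≤ _ := by exact_mod_cast h

lemma le_blockSens_hasIsolatedClique (hm : 1 ≤ m) (ha : (8 * m + 8 : ℝ) ≤ a)
    (hv : (v : ℝ) = a ^ (2 * (m + 1))) (hta : t ≤ a) (hat : a < t + 1) :
    1 / 2 ^ (2 * m + 1) * a ^ ((2 * m + 1) ^ 2) ≤
      (blockSens (hasIsolatedClique v (2 * m + 1) (m + 1) t) : ℝ) := by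
  have hm0 : (0 : ℝ) ≤ m := Nat.cast_nonneg m
  have ha0 : 0 < a := by linarith
  have ht : 2 * m + 1 < t := by
    have : ((2 * m + 1 : ℕ) : ℝ) < t := by push_cast; linarith
    exact_mod_cast this
  have hlarge : t * (2 * t) ≤ v := by
    have h3 : a ^ 3 ≤ v := hv ▸ pow_le_pow_right₀ (by linarith) (by omega)
    have h4 : (t : ℝ) * (2 * t) ≤ a * (2 * a) := by gcongr
    have : (t : ℝ) * (2 * t) ≤ v := by nlinarith [sq_nonneg a]
    exact_mod_cast this
  have htn : t ≤ v / t / 2 := by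
    rw [Nat.div_div_eq_div_mul, Nat.le_div_iff_mul_le (by omega)]
    linarith
  obtain ⟨q, hq, hlt, hle⟩ := Nat.exists_prime_lt_and_le_two_mul (v / t / 2) (by omega)
  have htq : t * q ≤ v :=
    (Nat.mul_le_mul_left t (show q ≤ v / t by omega)).trans (Nat.mul_div_le v t)
  obtain ⟨T, hT, hd⟩ := exists_packing (k := 2 * m + 1) hq (by omega) htq
  have h := card_le_blockSens_hasIsolatedClique (j := m + 1) (by omega) ht.le T hT hd
  rw [Fintype.card_fun, Fintype.card_fin, Fintype.card_fin] at h
  have hvq : v < q * (t * 2) := by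
    rw [Nat.div_div_eq_div_mul] at hlt
    exact (Nat.div_lt_iff_lt_mul (by omega)).1 hlt
  have hq' : a ^ (2 * m + 1) / 2 ≤ q := by
    have h1 : (v : ℝ) ≤ q * (t * 2) := by exact_mod_cast hvq.le
    have h2 : (q : ℝ) * (t * 2) ≤ q * (a * 2) := by gcongr
    have h3 : a ^ (2 * m + 1) * a ≤ q * 2 * a := by
      calc _ = (v : ℝ) := by rw [hv]; ring
        _ ≤ _ := by linarith
    linarith [le_of_mul_le_mul_right h3 ha0]
  calc _ = (a ^ (2 * m + 1) / 2) ^ (2 * m + 1) := by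
        rw [div_pow, ← pow_mul, sq]
        ring
    _ ≤ (q : ℝ) ^ (2 * m + 1) := by gcongr
    _ ≤ _ := by exact_mod_cast h

/-- All bounds, in terms of the root `a` of the number of vertices with `v = a ^ (2 * (m + 1))`. -/
lemma exists_bounds (m : ℕ) (hm : 1 ≤ m) : ∃ c C : ℝ, 0 < c ∧ 0 < C ∧
    ∀ (v t : ℕ) (a : ℝ), (8 * m + 8 : ℝ) ≤ a → (v : ℝ) = a ^ (2 * (m + 1)) → t ≤ a → a < t + 1 →
      c * a ^ ((m + 1) * (2 * m + 1)) ≤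
        (sens (hasIsolatedClique v (2 * m + 1) (m + 1) t) : ℝ) ∧
      (sens (hasIsolatedClique v (2 * m + 1) (m + 1) t) : ℝ) ≤
        C * a ^ ((m + 1) * (2 * m + 1)) ∧
      c * a ^ ((2 * m + 1) ^ 2) ≤
        (blockSens (hasIsolatedClique v (2 * m + 1) (m + 1) t) : ℝ) := by
  refine ⟨min (1 / (2 ^ (m + 1) * (m + 1).factorial * (2 ^ m * m.factorial)))
    (1 / 2 ^ (2 * m + 1)), 2 ^ (m + 1) * (m + 1).factorial, by positivity, by positivity, ?_⟩
  intro v t a ha hv hta hat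
  have ha0 : 0 ≤ a := by linarith [Nat.cast_nonneg (α := ℝ) m]
  exact ⟨(mul_le_mul_of_nonneg_right (min_le_left _ _) (by positivity)).trans
      (le_sens_hasIsolatedClique hm ha hv hta hat),
    sens_hasIsolatedClique_le hm ha hv hta hat,
    (mul_le_mul_of_nonneg_right (min_le_right _ _) (by positivity)).trans
      (le_blockSens_hasIsolatedClique hm ha hv hta hat)⟩

end Asymptotics

theorem stmt15 (k : ℕ) (hk : 3 ≤ k) (hko : Odd k) :
    ∃ f : (v : ℕ) → (HGraph v k → Bool),
      (∀ v, IsHypergraphProperty (f v)) ∧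
      ∃ c C : ℝ, 0 < c ∧ 0 < C ∧ ∃ v₀ : ℕ,
        (∀ v : ℕ, v₀ ≤ v →
          c * (v : ℝ) ^ ((k : ℝ) / 2) ≤ (sens (f v) : ℝ) ∧
          (sens (f v) : ℝ) ≤ C * (v : ℝ) ^ ((k : ℝ) / 2) ∧
          c * (v : ℝ) ^ ((k : ℝ) ^ 2 / ((k : ℝ) + 1)) ≤ (blockSens (f v) : ℝ)) ∧
        ∃ c' : ℝ, 0 < c' ∧ ∀ v : ℕ, v₀ ≤ v →
          c' * (sens (f v) : ℝ) ^ (2 * (k : ℝ) / ((k : ℝ) + 1)) ≤ (blockSens (f v) : ℝ) := by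
  obtain ⟨m, rfl⟩ := hko
  have hm : 1 ≤ m := by omega
  have hroot : ∀ v : ℕ, ((v : ℝ) ^ ((1 : ℝ) / (((2 * m + 1 : ℕ) : ℝ) + 1))) ^ (2 * (m + 1)) = v := by
    intro v
    rw [← Real.rpow_natCast, ← Real.rpow_mul (Nat.cast_nonneg v)]
    convert Real.rpow_one (v : ℝ) using 2
    push_cast
    field_simp
    ring
  refine ⟨fun v => hasIsolatedClique v (2 * m + 1) (m + 1)
    ⌊(v : ℝ) ^ ((1 : ℝ) / (((2 * m + 1 : ℕ) : ℝ) + 1))⌋₊,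
    fun v => isHypergraphProperty_hasIsolatedClique _ _ _ _, ?_⟩
  obtain ⟨c, C, hc, hC, hbound⟩ := exists_bounds m hm
  have hmain : ∀ v : ℕ, (8 * m + 8) ^ (2 * (m + 1)) ≤ v → _ := fun v hv => by
    have ha0 : (0 : ℝ) ≤ (v : ℝ) ^ ((1 : ℝ) / (((2 * m + 1 : ℕ) : ℝ) + 1)) := by positivity
    have ha : (8 * m + 8 : ℝ) ≤ (v : ℝ) ^ ((1 : ℝ) / (((2 * m + 1 : ℕ) : ℝ) + 1)) := by
      refine le_of_pow_le_pow_left₀ (n := 2 * (m + 1)) (by omega) ha0 ?_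
      rw [hroot v]
      exact_mod_cast hv
    have hpow1 : (v : ℝ) ^ (((2 * m + 1 : ℕ) : ℝ) / 2) =
        ((v : ℝ) ^ ((1 : ℝ) / (((2 * m + 1 : ℕ) : ℝ) + 1))) ^ ((m + 1) * (2 * m + 1)) := by
      rw [← Real.rpow_natCast _ ((m + 1) * (2 * m + 1)), ← Real.rpow_mul (Nat.cast_nonneg v)]
      congr 1
      push_cast
      field_simp
      ring
    have hpow2 : (v : ℝ) ^ (((2 * m + 1 : ℕ) : ℝ) ^ 2 / (((2 * m + 1 : ℕ) : ℝ) + 1)) =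
        ((v : ℝ) ^ ((1 : ℝ) / (((2 * m + 1 : ℕ) : ℝ) + 1))) ^ ((2 * m + 1) ^ 2) := by
      rw [← Real.rpow_natCast _ ((2 * m + 1) ^ 2), ← Real.rpow_mul (Nat.cast_nonneg v)]
      congr 1
      push_cast
      field_simp
    have := hbound v _ _ ha (hroot v).symm (Nat.floor_le ha0) (Nat.lt_floor_add_one _)
    rw [← hpow1, ← hpow2] at this
    exact this
  refine ⟨c, C, hc, hC, _, hmain,
    c / C ^ (2 * ((2 * m + 1 : ℕ) : ℝ) / (((2 * m + 1 : ℕ) : ℝ) + 1)), by positivity, fun v hv => ?_⟩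
  obtain ⟨-, h2, h3⟩ := hmain v hv
  refine le_trans ?_ h3
  rw [div_mul_eq_mul_div, div_le_iff₀ (by positivity), mul_assoc]
  refine mul_le_mul_of_nonneg_left ?_ hc.le
  calc _ ≤ (C * (v : ℝ) ^ (((2 * m + 1 : ℕ) : ℝ) / 2)) ^
        (2 * ((2 * m + 1 : ℕ) : ℝ) / (((2 * m + 1 : ℕ) : ℝ) + 1)) :=
        Real.rpow_le_rpow (by positivity) h2 (by positivity)
    _ = _ := by
        rw [Real.mul_rpow hC.le (by positivity), ← Real.rpow_mul (Nat.cast_nonneg v), mul_comm]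
        congr 2
        field_simp
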